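/- $\sum_{n\geq 0} \frac{\binom{2n}{n}}{(2n+1)^2 (-16)^n}\left(5 H_{2n+1} + \frac{12}{2n+1}\right) = 14\,\zeta(3)$. -/

import Mathlib

open Filter Topology

/-- Harmonic number `H_n = ∑_{k=1}^n 1/k`. -/
noncomputable def H (n : ℕ) : ℝ := ∑ k ∈ Finset.range n, 1 / ((k:ℝ) + 1)

/-- The Riemann zeta value `ζ(s) = ∑_{n ≥ 1} 1/n^s`. -/
noncomputable def zeta (s : ℕ) : ℝ := ∑' n : ℕ, 1 / ((n:ℝ) + 1) ^ s

/-!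
Put `w_k = (-1)^k (1/2)_k^2`. The functions
`F₀(n, k) = w_k Γ(n - k) / (Γ(n + k + 1) (2k + 1))` and
`G₀(n, k) = 4 w_k Γ(n - k + 1) / (Γ(n + k + 1) (2n + 1)^2)`
form a WZ pair: `F₀(n + 1, k) - F₀(n, k) = G₀(n, k + 1) - G₀(n, k)`. Hence so do
`F = -∂F₀/∂n` and `G = -∂G₀/∂n`, and differentiating the Gamma factors brings in harmonic numbers.
Summing the WZ equation over the triangle `k < n < N` relates the edge `k = 0`, where
`G(n, 0) = 16 / (2n + 1)^3` produces `16 (1 - 2⁻³) ζ(3) = 14 ζ(3)`, to the diagonal, where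
`F(n + 1, n) + G(n, n)` is the summand of the theorem; the third edge `∑_{k < N} F(N, k)`
tends to `0` since each of its terms is at most `1 / N^2` in absolute value.
-/

section

open scoped Nat

theorem H_succ (n : ℕ) : H (n + 1) = H n + 1 / ((n : ℝ) + 1) :=
  Finset.sum_range_succ ..

theorem H_mono : Monotone H :=
  monotone_nat_of_le_succ fun n ↦ by
    rw [H_succ]
    exact le_add_of_nonneg_right (by positivity)

theorem H_add_sub_le (m n : ℕ) : H (m + n) - H m ≤ n / ((m : ℝ) + 1) := by
  induction n with
  | zero => simp
  | succ n ih =>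
    have h_term : 1 / ((m : ℝ) + n + 1) ≤ 1 / ((m : ℝ) + 1) := by
      gcongr
      simp
    rw [← add_assoc, H_succ]
    push_cast
    rw [add_div]
    linarith

theorem hasSum_one_div_odd_pow {s : ℕ} (hs : 1 < s) :
    HasSum (fun n : ℕ ↦ 1 / (2 * (n : ℝ) + 1) ^ s) ((1 - 1 / 2 ^ s) * zeta s) := by
  let f : ℕ → ℝ := fun n ↦ 1 / ((n : ℝ) + 1) ^ s
  have hf : Summable f := by
    simpa [f] using (summable_nat_add_iff 1).2 (Real.summable_one_div_nat_pow.2 hs)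
  have h_even_index : Summable fun n ↦ f (2 * n) :=
    hf.comp_injective (i := (2 * ·)) fun a b h ↦ by simpa using h
  have h_odd_index : Summable fun n ↦ f (2 * n + 1) :=
    hf.comp_injective (i := (2 * · + 1)) fun a b h ↦ by simpa using h
  have h_split : ∑' n, f (2 * n) + ∑' n, f (2 * n + 1) = zeta s :=
    tsum_even_add_odd h_even_index h_odd_index
  have h_even_denominators : ∑' n, f (2 * n + 1) = 1 / 2 ^ s * zeta s := by
    rw [zeta, ← tsum_mul_left]
    refine tsum_congr fun n ↦ ?_
    simp only [f]
    push_cast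
    rw [one_div_mul_one_div, ← mul_pow]
    ring_nf
  have h_odd_denominators : ∑' n, f (2 * n) = (1 - 1 / 2 ^ s) * zeta s := by linarith
  rw [← h_odd_denominators]
  simpa [f] using h_even_index.hasSum

theorem sum_range_eq_of_wz {M : Type*} [AddCommGroup M] {F G : ℕ → ℕ → M}
    (hwz : ∀ n k, k < n → F (n + 1) k - F n k = G n (k + 1) - G n k) (N : ℕ) :
    ∑ n ∈ Finset.range N, (F (n + 1) n + G n n) =
      ∑ n ∈ Finset.range N, G n 0 + ∑ k ∈ Finset.range N, F N k := by
  induction N with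
  | zero => simp
  | succ N ih =>
    have h_row : ∑ k ∈ Finset.range N, F (N + 1) k - ∑ k ∈ Finset.range N, F N k =
        G N N - G N 0 := by
      rw [← Finset.sum_range_sub, ← Finset.sum_sub_distrib]
      exact Finset.sum_congr rfl fun k hk ↦ hwz N k (Finset.mem_range.1 hk)
    rw [Finset.sum_range_succ, ih, Finset.sum_range_succ, Finset.sum_range_succ,
      sub_eq_iff_eq_add.1 h_row]
    abel

theorem succ_factorial_mul_succ_factorial_le (m n : ℕ) :
    (m + 1)! * (n + 1)! ≤ (m + n + 1)! := by
  induction m with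
  | zero => simp
  | succ m ih =>
    calc (m + 1 + 1)! * (n + 1)! = (m + 2) * ((m + 1)! * (n + 1)!) := by
          rw [Nat.factorial_succ (m + 1)]; ring
      _ ≤ (m + n + 2) * (m + n + 1)! := by gcongr; omega
      _ = (m + 1 + n + 1)! := by
          rw [add_right_comm m 1 n, Nat.factorial_succ (m + n + 1)]

theorem factorial_sq_mul_factorial_mul_sq_le (k m : ℕ) :
    k ! ^ 2 * m ! * (k + m + 1) ^ 2 ≤ (m + 1) * (2 * k + m + 1)! := by
  calc k ! ^ 2 * m ! * (k + m + 1) ^ 2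
      = k ! * (k + m + 1) * ((k + m + 1) * (k ! * m !)) := by ring
    _ ≤ k ! * ((k + 1) * (m + 1)) * ((k + m + 1) * (k + m)!) := by
        gcongr
        · nlinarith
        · exact Nat.le_of_dvd (k + m).factorial_pos
            (Nat.factorial_mul_factorial_dvd_factorial_add k m)
    _ = (m + 1) * ((k + 1)! * (k + m + 1)!) := by
        rw [Nat.factorial_succ, Nat.factorial_succ]; ring
    _ ≤ (m + 1) * (2 * k + m + 1)! := by
        rw [show 2 * k + m + 1 = k + (k + m) + 1 by ring]
        gcongr
        exact succ_factorial_mul_succ_factorial_le k (k + m)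

/-- The weight `(-1)^k (1/2)_k^2` of the WZ pair, where `(1/2)_k` is a Pochhammer symbol,
written through `(1/2)_k = (2k)! / (4^k k!)`. -/
noncomputable def wzWeight (k : ℕ) : ℝ := k.centralBinom * (2 * k)! / (-16) ^ k

theorem wzWeight_succ (k : ℕ) : wzWeight (k + 1) = -((k : ℝ) + 1 / 2) ^ 2 * wzWeight k := by
  have h_binom : ((k : ℝ) + 1) * (k + 1).centralBinom = 2 * (2 * k + 1) * k.centralBinom := by
    exact_mod_cast k.succ_mul_centralBinom_succ
  have h_fact : ((2 * (k + 1))! : ℝ) = (2 * k + 2) * (2 * k + 1) * (2 * k)! := by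
    rw [mul_add_one, Nat.factorial_succ, Nat.factorial_succ]
    push_cast
    ring
  calc wzWeight (k + 1)
      = ((k : ℝ) + 1) * (k + 1).centralBinom * (2 * (2 * k + 1)) * (2 * k)! /
          ((-16) ^ k * (-16)) := by
        rw [wzWeight, h_fact, pow_succ]; ring
    _ = -((k : ℝ) + 1 / 2) ^ 2 * wzWeight k := by
        rw [h_binom, wzWeight]; field_simp; ring

theorem abs_wzWeight_le (k : ℕ) : |wzWeight k| ≤ (k ! : ℝ) ^ 2 := by
  induction k with
  | zero => simp [wzWeight]
  | succ k ih =>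
    rw [wzWeight_succ, abs_mul, abs_neg, abs_of_nonneg (by positivity), Nat.factorial_succ]
    push_cast
    rw [mul_pow]
    gcongr
    norm_num

/-- The component `F = -∂F₀/∂n` of the differentiated WZ pair. It is only meaningful for `k < n`,
where the subtractions are not truncated. -/
noncomputable def wzF (n k : ℕ) : ℝ :=
  wzWeight k * (n - k - 1)! / ((n + k)! * (2 * k + 1)) * (H (n + k) - H (n - k - 1))

/-- The component `G = -∂G₀/∂n` of the differentiated WZ pair. It is only meaningful for `k ≤ n`,
where the subtractions are not truncated. -/
noncomputable def wzG (n k : ℕ) : ℝ :=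
  4 * wzWeight k * (n - k)! / ((n + k)! * (2 * n + 1) ^ 2) *
    (H (n + k) - H (n - k) + 4 / (2 * n + 1))

theorem wzF_succ_sub_wzF {n k : ℕ} (h : k < n) :
    wzF (n + 1) k - wzF n k = wzG n (k + 1) - wzG n k := by
  obtain ⟨m, rfl⟩ := Nat.exists_eq_add_of_lt h
  simp only [wzF, wzG, wzWeight_succ,
    show k + m + 1 + 1 - k - 1 = m + 1 by omega, show k + m + 1 - (k + 1) = m by omega,
    show k + m + 1 - k = m + 1 by omega,
    show k + m + 1 + 1 + k = 2 * k + m + 1 + 1 by ring,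
    show k + m + 1 + (k + 1) = 2 * k + m + 1 + 1 by ring,
    show k + m + 1 + k = 2 * k + m + 1 by ring,
    H_succ m, H_succ (2 * k + m + 1), Nat.factorial_succ m, Nat.factorial_succ (2 * k + m + 1)]
  push_cast
  have h_half : 2 * ((k : ℝ) + m + 1) + 1 ≠ 0 := by positivity
  field_simp
  ring

theorem wzG_zero_right (n : ℕ) : wzG n 0 = 16 * (1 / (2 * (n : ℝ) + 1) ^ 3) := by
  simp only [wzG, wzWeight, add_zero, Nat.sub_zero, mul_zero, sub_self, zero_add,
    Nat.centralBinom_zero, Nat.factorial_zero, pow_zero, Nat.cast_one]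
  field_simp
  norm_num

theorem wzF_succ_self_add_wzG_self (n : ℕ) :
    wzF (n + 1) n + wzG n n =
      ((2 * n).choose n : ℝ) / ((2 * (n : ℝ) + 1) ^ 2 * (-16) ^ n) *
        (5 * H (2 * n + 1) + 12 / (2 * (n : ℝ) + 1)) := by
  have h_H_zero : H 0 = 0 := Finset.sum_range_zero _
  simp only [wzF, wzG, wzWeight, Nat.centralBinom_eq_two_mul_choose,
    show n + 1 - n - 1 = 0 by omega, show n + 1 + n = 2 * n + 1 by ring, ← two_mul, Nat.sub_self,
    h_H_zero, H_succ (2 * n), Nat.factorial_succ (2 * n), Nat.factorial_zero]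
  push_cast
  field_simp
  ring

theorem abs_wzF_le {N k : ℕ} (h : k < N) : |wzF N k| ≤ 1 / (N : ℝ) ^ 2 := by
  obtain ⟨m, rfl⟩ := Nat.exists_eq_add_of_lt h
  have h_H : |H (2 * k + m + 1) - H m| ≤ (2 * k + 1) / ((m : ℝ) + 1) := by
    rw [abs_of_nonneg (sub_nonneg.2 (H_mono (by omega)))]
    convert H_add_sub_le m (2 * k + 1) using 3
    · ring
    · push_cast; ring
  have h_fact : (k ! : ℝ) ^ 2 * m ! * (k + m + 1) ^ 2 ≤ (m + 1) * (2 * k + m + 1)! := by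
    exact_mod_cast factorial_sq_mul_factorial_mul_sq_le k m
  calc |wzF (k + m + 1) k|
      = |wzWeight k| * m ! / ((2 * k + m + 1)! * (2 * k + 1)) * |H (2 * k + m + 1) - H m| := by
        rw [wzF, show k + m + 1 - k - 1 = m by omega, show k + m + 1 + k = 2 * k + m + 1 by ring,
          abs_mul, abs_div, abs_mul, Nat.abs_cast,
          abs_of_pos (by positivity : 0 < ((2 * k + m + 1)! : ℝ) * (2 * k + 1))]
    _ ≤ (k ! : ℝ) ^ 2 * m ! / ((2 * k + m + 1)! * (2 * k + 1)) * ((2 * k + 1) / (m + 1)) := by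
        gcongr
        exact abs_wzWeight_le k
    _ = (k ! : ℝ) ^ 2 * m ! / ((m + 1) * (2 * k + m + 1)!) := by field_simp
    _ ≤ 1 / ((k + m + 1 : ℕ) : ℝ) ^ 2 := by
        rw [div_le_div_iff₀ (by positivity) (by positivity), one_mul]
        exact_mod_cast h_fact

theorem tendsto_sum_range_wzF :
    Tendsto (fun N ↦ ∑ k ∈ Finset.range N, wzF N k) atTop (𝓝 0) := by
  refine squeeze_zero_norm (fun N ↦ ?_) tendsto_one_div_atTop_nhds_zero_nat
  calc ‖∑ k ∈ Finset.range N, wzF N k‖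
      ≤ ∑ k ∈ Finset.range N, 1 / (N : ℝ) ^ 2 :=
        norm_sum_le_of_le _ fun k hk ↦ abs_wzF_le (Finset.mem_range.1 hk)
    _ = 1 / (N : ℝ) := by
        rw [Finset.sum_const, Finset.card_range, nsmul_eq_mul]
        field_simp

end

theorem stmt_6 :
    Tendsto (fun N => ∑ n ∈ Finset.range N,
      ((2*n).choose n : ℝ) / ((2*(n:ℝ)+1)^2 * (-16)^n) *
        (5 * H (2*n+1) + 12 / (2*(n:ℝ)+1)))
      atTop (𝓝 (14 * zeta 3)) := by
  have h_zeta : Tendsto (fun N ↦ ∑ n ∈ Finset.range N, wzG n 0) atTop (𝓝 (14 * zeta 3)) := by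
    convert ((hasSum_one_div_odd_pow (s := 3) (by norm_num)).mul_left 16).tendsto_sum_nat using 2
    · exact Finset.sum_congr rfl fun n _ ↦ wzG_zero_right n
    · ring_nf
  have h_sum := h_zeta.add tendsto_sum_range_wzF
  rw [add_zero] at h_sum
  refine h_sum.congr fun N ↦ ?_
  rw [← sum_range_eq_of_wz (fun _ _ ↦ wzF_succ_sub_wzF)]
  exact Finset.sum_congr rfl fun n _ ↦ wzF_succ_self_add_wzG_self n
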